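/- Let [(Qᵢ,𝒬ᵢ),Tᵢ,(Δ,𝒟)], i = 1,2, be two generators with the same output space, and let f: Q₁ → Q₂ be a measurable map such that (f, id_Δ) is transition-preserving, i.e. T₂(f(x), A×B) = T₁(x, f⁻¹(A)×B) for all x ∈ Q₁, A ∈ 𝒬₂, B ∈ 𝒟. Then G_{T₁} = G_{T₂} ∘ f_*, where f_* is the pushforward map on probability measures. In particular im(G_{T₁}) ⊆ im(G_{T₂}), with equality if f_* is onto. -/

import Mathlib

open MeasureTheory ProbabilityTheory
open scoped ENNReal

namespace HiddenSources

variable {Q Δ : Type*}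

/-- The iterated integral appearing in the finite-dimensional marginals:
`fdmAux T n x B = ∫_{Q×B₁}⋯∫_{Q×Bₙ} T(x_{n-1}, d(xₙ,yₙ)) ⋯ T(x, d(x₁,y₁))`. -/
noncomputable def fdmAux [MeasurableSpace Q] [MeasurableSpace Δ] (T : Kernel Q (Q × Δ)) :
    (n : ℕ) → Q → (Fin n → Set Δ) → ℝ≥0∞
  | 0, _, _ => 1
  | n + 1, x, B =>
      ∫⁻ p : Q × Δ, Set.indicator (B 0) (fun _ => fdmAux T n p.1 fun i => B i.succ) p.2 ∂(T x)

/-- The finite-dimensional marginal `Pₙ^{μ,T}(B₁ × ⋯ × Bₙ)` of the observed process of the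
generator `T` with initial distribution `μ`. -/
noncomputable def fdm [MeasurableSpace Q] [MeasurableSpace Δ] (T : Kernel Q (Q × Δ))
    (μ : Measure Q) (n : ℕ) (B : Fin n → Set Δ) : ℝ≥0∞ :=
  ∫⁻ x, fdmAux T n x B ∂μ

/-- `P` is the path measure `P^{μ,T}` on `Δ^ℕ`: a probability measure whose cylinder
sets have measure given by the finite-dimensional marginals `Pₙ^{μ,T}`. -/
def IsPathMeasure [MeasurableSpace Q] [MeasurableSpace Δ] (T : Kernel Q (Q × Δ))
    (μ : Measure Q) (P : Measure (ℕ → Δ)) : Prop :=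
  IsProbabilityMeasure P ∧
    ∀ (n : ℕ) (B : Fin n → Set Δ), (∀ i, MeasurableSet (B i)) →
      P {y | ∀ i : Fin n, y i ∈ B i} = fdm T μ n B

/-- `im(G_T)`: the set of stochastic processes (identified with their path measures on
`Δ^ℕ`) generated by `T`, as the initial distribution `μ` ranges over the probability
measures on `Q`. -/
def genSet [MeasurableSpace Q] [MeasurableSpace Δ] (T : Kernel Q (Q × Δ)) :
    Set (Measure (ℕ → Δ)) :=
  {P | ∃ μ : Measure Q, IsProbabilityMeasure μ ∧ IsPathMeasure T μ P}

/-- `(f, g)` is a transition-preserving map (morphism of generators) from `T₁` to `T₂`: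
`f`, `g` are measurable and `T₂(f(x), A × B) = T₁(x, f⁻¹(A) × g⁻¹(B))` for all `x`
and measurable `A`, `B`. -/
def TransitionPreserving {Q₁ Q₂ Δ₁ Δ₂ : Type*}
    [MeasurableSpace Q₁] [MeasurableSpace Q₂] [MeasurableSpace Δ₁] [MeasurableSpace Δ₂]
    (T₁ : Kernel Q₁ (Q₁ × Δ₁)) (T₂ : Kernel Q₂ (Q₂ × Δ₂))
    (f : Q₁ → Q₂) (g : Δ₁ → Δ₂) : Prop :=
  Measurable f ∧ Measurable g ∧
    ∀ (x : Q₁) (A : Set Q₂) (B : Set Δ₂), MeasurableSet A → MeasurableSet B →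
      T₂ (f x) (A ×ˢ B) = T₁ x ((f ⁻¹' A) ×ˢ (g ⁻¹' B))

theorem fdmAux_integrand_measurable [MeasurableSpace Q] [MeasurableSpace Δ]
    {g : Q → ℝ≥0∞} (hg : Measurable g) {B : Set Δ} (hB : MeasurableSet B) :
    Measurable fun p : Q × Δ => Set.indicator B (fun _ => g p.1) p.2 := by
  have : (fun p : Q × Δ => Set.indicator B (fun _ => g p.1) p.2)
      = Set.indicator (Prod.snd ⁻¹' B) (fun p : Q × Δ => g p.1) := by
    funext p
    by_cases h : p.2 ∈ B <;> simp [Set.indicator, h]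
  rw [this]
  exact (hg.comp measurable_fst).indicator (measurable_snd hB)

theorem fdmAux_measurable [MeasurableSpace Q] [MeasurableSpace Δ] (T : Kernel Q (Q × Δ))
    (n : ℕ) : ∀ (B : Fin n → Set Δ), (∀ i, MeasurableSet (B i)) →
      Measurable fun x => fdmAux T n x B := by
  induction n with
  | zero => intro B _; simp only [fdmAux]; exact measurable_const
  | succ n ih =>
    intro B hB
    simp only [fdmAux]
    exact (fdmAux_integrand_measurable (ih _ fun i => hB i.succ) (hB 0)).lintegral_kernel

theorem TransitionPreserving.map_eq {Q₁ Q₂ Δ : Type*}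
    [MeasurableSpace Q₁] [MeasurableSpace Q₂] [MeasurableSpace Δ]
    {T₁ : Kernel Q₁ (Q₁ × Δ)} {T₂ : Kernel Q₂ (Q₂ × Δ)}
    [IsMarkovKernel T₁] [IsMarkovKernel T₂]
    {f : Q₁ → Q₂} (hf : TransitionPreserving T₁ T₂ f id) (x : Q₁) :
    T₂ (f x) = (T₁ x).map (Prod.map f id) := by
  obtain ⟨hm, hi, h⟩ := hf
  refine Measure.ext_prod fun {A B} hA hB => ?_
  rw [h x A B hA hB, Measure.map_apply (hm.prodMap hi) (hA.prod hB)]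
  rfl

theorem TransitionPreserving.fdmAux_eq {Q₁ Q₂ Δ : Type*}
    [MeasurableSpace Q₁] [MeasurableSpace Q₂] [MeasurableSpace Δ]
    {T₁ : Kernel Q₁ (Q₁ × Δ)} {T₂ : Kernel Q₂ (Q₂ × Δ)}
    [IsMarkovKernel T₁] [IsMarkovKernel T₂]
    {f : Q₁ → Q₂} (hf : TransitionPreserving T₁ T₂ f id) (n : ℕ) :
    ∀ (x : Q₁) (B : Fin n → Set Δ), (∀ i, MeasurableSet (B i)) →
      fdmAux T₂ n (f x) B = fdmAux T₁ n x B := by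
  induction n with
  | zero => intro x B _; simp only [fdmAux]
  | succ n ih =>
    intro x B hB
    simp only [fdmAux]
    rw [hf.map_eq, lintegral_map
      (fdmAux_integrand_measurable (fdmAux_measurable T₂ n _ fun i => hB i.succ) (hB 0))
      (hf.1.prodMap hf.2.1)]
    refine lintegral_congr fun p => ?_
    simp only [Prod.map_fst, Prod.map_snd, id_eq, ih p.1 _ fun i => hB i.succ]

theorem TransitionPreserving.fdm_eq {Q₁ Q₂ Δ : Type*}
    [MeasurableSpace Q₁] [MeasurableSpace Q₂] [MeasurableSpace Δ]
    {T₁ : Kernel Q₁ (Q₁ × Δ)} {T₂ : Kernel Q₂ (Q₂ × Δ)}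
    [IsMarkovKernel T₁] [IsMarkovKernel T₂]
    {f : Q₁ → Q₂} (hf : TransitionPreserving T₁ T₂ f id) (μ : Measure Q₁) (n : ℕ)
    (B : Fin n → Set Δ) (hB : ∀ i, MeasurableSet (B i)) :
    fdm T₂ (μ.map f) n B = fdm T₁ μ n B := by
  unfold fdm
  rw [lintegral_map (fdmAux_measurable T₂ n B hB) hf.1]
  exact lintegral_congr fun x => hf.fdmAux_eq n x B hB

/-- **Corollary 3.3.** If `f : Q₁ → Q₂` is transition-preserving (with identity on the
common output space), then `G_{T₁} = G_{T₂} ∘ f_*`; in particular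
`im(G_{T₁}) ⊆ im(G_{T₂})`, with equality if `f_*` is onto. -/
theorem genSet_subset_of_transitionPreserving {Q₁ Q₂ Δ : Type*}
    [MeasurableSpace Q₁] [MeasurableSpace Q₂] [MeasurableSpace Δ]
    (T₁ : Kernel Q₁ (Q₁ × Δ)) (T₂ : Kernel Q₂ (Q₂ × Δ))
    [IsMarkovKernel T₁] [IsMarkovKernel T₂]
    (f : Q₁ → Q₂) (hf : TransitionPreserving T₁ T₂ f id) :
    (∀ (μ : Measure Q₁), IsProbabilityMeasure μ → ∀ P : Measure (ℕ → Δ),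
        IsPathMeasure T₁ μ P → IsPathMeasure T₂ (μ.map f) P) ∧
      genSet T₁ ⊆ genSet T₂ ∧
      ((∀ ν : Measure Q₂, IsProbabilityMeasure ν →
          ∃ μ : Measure Q₁, IsProbabilityMeasure μ ∧ μ.map f = ν) →
        genSet T₁ = genSet T₂) := by
  have key : ∀ (μ : Measure Q₁) (P : Measure (ℕ → Δ)),
      IsPathMeasure T₁ μ P ↔ IsPathMeasure T₂ (μ.map f) P := by
    intro μ P
    refine and_congr Iff.rfl ⟨fun h n B hB => ?_, fun h n B hB => ?_⟩
    · rw [hf.fdm_eq μ n B hB, h n B hB]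
    · rw [← hf.fdm_eq μ n B hB, h n B hB]
  have sub : genSet T₁ ⊆ genSet T₂ := by
    rintro P ⟨μ, hμ, hP⟩
    exact ⟨μ.map f, Measure.isProbabilityMeasure_map hf.1.aemeasurable, (key μ P).1 hP⟩
  refine ⟨fun μ _ P hP => (key μ P).1 hP, sub, fun hs => Set.Subset.antisymm sub ?_⟩
  rintro P ⟨ν, hν, hP⟩
  obtain ⟨μ, hμ, rfl⟩ := hs ν hν
  exact ⟨μ, hμ, (key μ P).2 hP⟩

end HiddenSources
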